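/- Let Γ be a finitely generated residually finite group with a box space (Γ/Γ_i)_i. Then either the asymptotic dimension of the family (Γ/Γ_i)_i is infinite, or it is equal to the asymptotic dimension of Γ (with its word metric). -/

import Mathlib

/-!
Suppose the box space has asymptotic dimension at most some finite `m`.

*From the box space to `Γ`.* Any two given elements of `Γ` are, for all large `i`, at the same
distance in `Γ ⧸ Γ_i` as in `Γ` (`dQ_eq_of_injective`), because balls of `Γ` are finite and the
`Γ_i` decrease to the trivial subgroup (`eventually_injective`). The covers of the quotients
therefore converge, along a nonprincipal ultrafilter on `ℕ`, to a cover of `Γ` with the same number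
of sets and the same bound.

*From `Γ` to the box space.* Let `Γ` have asymptotic dimension at most `k`, with a bound `f r` at
scale `r`. Cover the quotients by `m + 1` sets whose `L`-components have diameter at most `D`. For
large `i`, subsets of `Γ ⧸ Γ_i` of diameter at most `D` lift isometrically to `Γ`, so each of the
`m + 1` sets, being an `L`-separated union of such pieces, has a cover by `k + 1` sets with bound
`f r` at every scale `r ≤ L` (`Good.of_components`). The point is that `f` does not depend on `L`
or `D`. By the finite union theorem (`good_iUnion`), for `L` large in terms of `m`, `f` and the
target scale, the whole quotient then has a cover by `k + 1` sets with a bound depending only on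
`m`, `f` and the target scale. The finitely many remaining quotients are finite.
-/

/-!
STATEMENT 12 (Yamauchi, Willett): For a box space (Γ/Γ_i) of a finitely generated
residually finite group Γ, the asymptotic dimension of the box space is infinite or
equal to the asymptotic dimension of Γ.
-/

open Metric Set

noncomputable def wordLength {G : Type*} [Group G] (S : Set G) (g : G) : ℕ :=
  sInf {n : ℕ | ∃ w : List G, (∀ x ∈ w, x ∈ S) ∧ w.length = n ∧ w.prod = g}

noncomputable def wordDist {G : Type*} [Group G] (S : Set G) (g h : G) : ℝ :=
  (wordLength S (g⁻¹ * h) : ℝ)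

def IsFinSymmGen {G : Type*} [Group G] (S : Set G) : Prop :=
  S.Finite ∧ (∀ s ∈ S, s⁻¹ ∈ S) ∧ Subgroup.closure S = ⊤

def RConn {Z : Type*} (ρ : Z → Z → ℝ) (R : ℝ) (U : Set Z) : Z → Z → Prop :=
  Relation.ReflTransGen (fun a b => a ∈ U ∧ b ∈ U ∧ ρ a b < R)

def FamAsdimLE {ι : Type*} (Z : ι → Type*) (ρ : ∀ i, Z i → Z i → ℝ) (k : ℕ) : Prop :=
  ∀ R : ℕ, 0 < R → ∃ D : ℝ, ∀ i : ι, ∃ U : Fin (k + 1) → Set (Z i),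
    (∀ z : Z i, ∃ j, z ∈ U j) ∧
    ∀ j, ∀ a ∈ U j, ∀ b ∈ U j, RConn (ρ i) (R : ℝ) (U j) a b → ρ i a b ≤ D

/-! ### Word length -/

section WordLength

variable {Γ : Type} [Group Γ] {S : Set Γ}

lemma wordLength_le (w : List Γ) (hw : ∀ x ∈ w, x ∈ S) : wordLength S w.prod ≤ w.length :=
  Nat.sInf_le ⟨w, hw, rfl, rfl⟩

lemma exists_word (hS : IsFinSymmGen S) (g : Γ) :
    ∃ w : List Γ, (∀ x ∈ w, x ∈ S) ∧ w.length = wordLength S g ∧ w.prod = g := by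
  have hg : g ∈ Subgroup.closure S := by rw [hS.2.2]; trivial
  rw [← Subgroup.mem_toSubmonoid, Subgroup.closure_toSubmonoid] at hg
  obtain ⟨l, hl, hp⟩ := Submonoid.exists_list_of_mem_closure hg
  refine Nat.sInf_mem (s := {n : ℕ | ∃ w : List Γ, (∀ x ∈ w, x ∈ S) ∧ w.length = n ∧ w.prod = g})
    ⟨l.length, l, fun x hx => ?_, rfl, hp⟩
  rcases hl x hx with h | h
  · exact h
  · simpa using hS.2.1 _ (Set.mem_inv.1 h)

lemma wordLength_one : wordLength S (1 : Γ) = 0 := by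
  simpa using wordLength_le (S := S) [] (by simp)

lemma wordLength_mul_le (hS : IsFinSymmGen S) (g h : Γ) :
    wordLength S (g * h) ≤ wordLength S g + wordLength S h := by
  obtain ⟨v, hv, hvl, hvp⟩ := exists_word hS g
  obtain ⟨w, hw, hwl, hwp⟩ := exists_word hS h
  have := wordLength_le (S := S) (v ++ w) (by
    intro x hx
    rcases List.mem_append.1 hx with h | h
    · exact hv x h
    · exact hw x h)
  rw [List.prod_append, List.length_append] at this
  rwa [hvp, hwp, hvl, hwl] at this

lemma wordLength_inv_le (hS : IsFinSymmGen S) (g : Γ) :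
    wordLength S g⁻¹ ≤ wordLength S g := by
  obtain ⟨v, hv, hvl, hvp⟩ := exists_word hS g
  have := wordLength_le (S := S) (v.map (·⁻¹)).reverse (by
    intro x hx
    simp only [List.mem_reverse, List.mem_map] at hx
    obtain ⟨y, hy, rfl⟩ := hx
    exact hS.2.1 _ (hv y hy))
  rw [← List.prod_inv_reverse, hvp] at this
  simpa [hvl] using this

lemma finite_ball (hS : IsFinSymmGen S) (N : ℕ) : {g : Γ | wordLength S g ≤ N}.Finite := by
  have : Finite S := hS.1
  refine ((List.finite_length_le S N).image fun l => (l.map Subtype.val).prod).subset ?_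
  intro g hg
  obtain ⟨w, hw, hl, hp⟩ := exists_word hS g
  lift w to List S using hw
  refine ⟨w, ?_, hp⟩
  have hg' : wordLength S g ≤ N := hg
  simp only [List.length_map] at hl
  simp only [mem_ofPred_eq]
  omega

/-- For large `i`, the quotient map `Γ → Γ ⧸ Γ_i` has no nontrivial element of length at most `N`
in its kernel. -/
lemma eventually_injective (hS : IsFinSymmGen S) (Gsub : ℕ → Subgroup Γ)
    (hnested : ∀ i, Gsub (i + 1) ≤ Gsub i) (htriv : (⨅ i, Gsub i) = ⊥) (N : ℕ) :
    ∀ᶠ i in Filter.atTop, ∀ n ∈ Gsub i, wordLength S n ≤ N → n = 1 := by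
  have hanti : Antitone Gsub := antitone_nat_of_succ_le hnested
  have key : ∀ g ∈ {g : Γ | wordLength S g ≤ N},
      ∀ᶠ i in Filter.atTop, g ∈ Gsub i → g = 1 := by
    intro g _
    by_cases hg : g = 1
    · exact Filter.Eventually.of_forall fun _ _ => hg
    · have : g ∉ ⨅ i, Gsub i := by rwa [htriv, Subgroup.mem_bot]
      rw [Subgroup.mem_iInf] at this
      push Not at this
      obtain ⟨i₀, hi₀⟩ := this
      filter_upwards [Filter.eventually_ge_atTop i₀] with i hi hgi
      exact absurd (hanti hi hgi) hi₀
  filter_upwards [(Filter.eventually_all_finite (finite_ball hS N)).2 key] with i hi n hn hl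
  exact hi n hl hn

end WordLength

/-! ### The quotient metric -/

section Quotient

variable {Γ : Type} [Group Γ] {S : Set Γ} {N : Subgroup Γ} {d : Γ ⧸ N → Γ ⧸ N → ℝ}

/-- The formula for the quotient metric. -/
def IsQuotMetric (S : Set Γ) (N : Subgroup Γ) (d : Γ ⧸ N → Γ ⧸ N → ℝ) : Prop :=
  ∀ g h : Γ, d (QuotientGroup.mk g) (QuotientGroup.mk h) =
    sInf ((fun n => (wordLength S (g⁻¹ * h * n) : ℝ)) '' (N : Set Γ))

lemma dQ_le (hd : IsQuotMetric S N d) (g h : Γ) :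
    d (QuotientGroup.mk g) (QuotientGroup.mk h) ≤ wordLength S (g⁻¹ * h) := by
  rw [hd]
  refine csInf_le ⟨0, ?_⟩ ⟨1, N.one_mem, by simp⟩
  rintro _ ⟨n, _, rfl⟩
  positivity

/-- Lengths are natural numbers, so the infimum defining the quotient metric is attained. -/
lemma dQ_attained (hd : IsQuotMetric S N d) (g : Γ) (z : Γ ⧸ N) :
    ∃ h : Γ, (QuotientGroup.mk h : Γ ⧸ N) = z ∧
      d (QuotientGroup.mk g) z = wordLength S (g⁻¹ * h) := by
  obtain ⟨x, rfl⟩ := QuotientGroup.mk_surjective z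
  set A : Set ℕ := (fun n => wordLength S (g⁻¹ * x * n)) '' (N : Set Γ) with hA
  have hne : A.Nonempty := ⟨_, 1, N.one_mem, rfl⟩
  obtain ⟨n, hn, hnA⟩ := Nat.sInf_mem hne
  refine ⟨x * n, QuotientGroup.mk_mul_of_mem x hn, ?_⟩
  rw [hd]
  refine IsLeast.csInf_eq ⟨⟨n, hn, by simp only [mul_assoc]⟩, ?_⟩
  rintro _ ⟨p, hp, rfl⟩
  have h1 : sInf A ≤ wordLength S (g⁻¹ * x * p) := Nat.sInf_le ⟨p, hp, rfl⟩
  rw [← hnA] at h1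
  simp only [← mul_assoc]
  exact_mod_cast h1

lemma dQ_nonneg (hd : IsQuotMetric S N d) (y z : Γ ⧸ N) : 0 ≤ d y z := by
  obtain ⟨g, rfl⟩ := QuotientGroup.mk_surjective y
  obtain ⟨h, -, hh⟩ := dQ_attained hd g z
  rw [hh]; positivity

lemma dQ_self (hd : IsQuotMetric S N d) (y : Γ ⧸ N) : d y y = 0 := by
  refine le_antisymm ?_ (dQ_nonneg hd y y)
  obtain ⟨g, rfl⟩ := QuotientGroup.mk_surjective y
  simpa [wordLength_one] using dQ_le hd g g

lemma dQ_symm (hS : IsFinSymmGen S) (hd : IsQuotMetric S N d) (y z : Γ ⧸ N) : d y z = d z y := by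
  have key : ∀ y z, d y z ≤ d z y := by
    intro y z
    obtain ⟨g, rfl⟩ := QuotientGroup.mk_surjective z
    obtain ⟨h, rfl, hh⟩ := dQ_attained hd g y
    rw [hh]
    refine (dQ_le hd h g).trans ?_
    have := wordLength_inv_le hS (g⁻¹ * h)
    rw [mul_inv_rev, inv_inv] at this
    exact_mod_cast this
  exact le_antisymm (key _ _) (key _ _)

lemma dQ_triangle (hS : IsFinSymmGen S) (hd : IsQuotMetric S N d) (x y z : Γ ⧸ N) :
    d x z ≤ d x y + d y z := by
  obtain ⟨a, rfl⟩ := QuotientGroup.mk_surjective x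
  obtain ⟨b, rfl, hb⟩ := dQ_attained hd a y
  obtain ⟨c, rfl, hc⟩ := dQ_attained hd b z
  rw [hb, hc]
  refine (dQ_le hd a c).trans ?_
  have := wordLength_mul_le hS (a⁻¹ * b) (b⁻¹ * c)
  rw [show a⁻¹ * b * (b⁻¹ * c) = a⁻¹ * c by group] at this
  exact_mod_cast this

/-- If `N` meets the ball of radius `2 * M` trivially, the quotient map preserves distances up to
`M`. -/
lemma dQ_eq_of_injective (hS : IsFinSymmGen S) (hd : IsQuotMetric S N d) {M : ℕ}
    (hM : ∀ n ∈ N, wordLength S n ≤ 2 * M → n = 1) {x y : Γ} (hxy : wordLength S (x⁻¹ * y) ≤ M) :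
    d (QuotientGroup.mk x) (QuotientGroup.mk y) = wordLength S (x⁻¹ * y) := by
  obtain ⟨h, hh, hdist⟩ := dQ_attained hd x (QuotientGroup.mk y)
  have h1 : wordLength S (x⁻¹ * h) ≤ wordLength S (x⁻¹ * y) := by
    have := dQ_le hd x y
    rw [hdist] at this
    exact_mod_cast this
  have hmem : y⁻¹ * h ∈ N := QuotientGroup.eq.1 hh.symm
  have h2 := wordLength_mul_le hS (x⁻¹ * y)⁻¹ (x⁻¹ * h)
  have h3 := wordLength_inv_le hS (x⁻¹ * y)
  rw [show (x⁻¹ * y)⁻¹ * (x⁻¹ * h) = y⁻¹ * h by group] at h2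
  have h4 := hM _ hmem (by omega)
  have h5 : h = y := (inv_mul_eq_one.1 h4).symm
  rw [hdist, h5]

end Quotient

/-! ### Covers at a given scale -/

section Cover

variable {Z X : Type} {ρ : Z → Z → ℝ} {σ : X → X → ℝ}

/-- `Good ρ k U r d`: the subset `U` is covered by `k + 1` sets whose `r`-components have diameter
at most `d`. The covering sets need not lie inside `U`. -/
def Good (ρ : Z → Z → ℝ) (k : ℕ) (U : Set Z) (r d : ℕ) : Prop :=
  ∃ W : Fin (k + 1) → Set Z, (∀ z ∈ U, ∃ j, z ∈ W j) ∧
    ∀ j, ∀ a ∈ W j, ∀ b ∈ W j, RConn ρ r (W j) a b → ρ a b ≤ d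

lemma famAsdimLE_iff {ι : Type} {Z : ι → Type} {ρ : ∀ i, Z i → Z i → ℝ} {k : ℕ} :
    FamAsdimLE Z ρ k ↔ ∀ r : ℕ, 0 < r → ∃ d : ℕ, ∀ i, Good (ρ i) k univ r d := by
  constructor
  · intro h r hr
    obtain ⟨D, hD⟩ := h r hr
    obtain ⟨d, hd⟩ := exists_nat_ge D
    refine ⟨d, fun i => ?_⟩
    obtain ⟨U, hU, hb⟩ := hD i
    exact ⟨U, fun z _ => hU z, fun j a ha b hb' hab => (hb j a ha b hb' hab).trans hd⟩
  · intro h r hr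
    obtain ⟨d, hd⟩ := h r hr
    refine ⟨d, fun i => ?_⟩
    obtain ⟨U, hU, hb⟩ := hd i
    exact ⟨U, fun z => hU z trivial, hb⟩

/-- An `r`-chain in `A ∪ B` moves between consecutive visits to `B` through a single
`r`-component of `A`, hence all its visits to `B` lie in one `(d + 2 * r)`-component of `B`. -/
lemma bound_union (h0 : ∀ a, ρ a a = 0) (htri : ∀ a b c, ρ a c ≤ ρ a b + ρ b c)
    {A B : Set Z} {r d d' : ℕ}
    (hA : ∀ a ∈ A, ∀ b ∈ A, RConn ρ r A a b → ρ a b ≤ d)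
    (hB : ∀ a ∈ B, ∀ b ∈ B, RConn ρ (d + 2 * r : ℕ) B a b → ρ a b ≤ d')
    {a b : Z} (ha : a ∈ A ∪ B) (hab : RConn ρ r (A ∪ B) a b) :
    ρ a b ≤ (d' + 2 * (d + r) : ℕ) := by
  have hr0 : (0 : ℝ) ≤ r := by positivity
  have hd0 : (0 : ℝ) ≤ d := by positivity
  have hd0' : (0 : ℝ) ≤ d' := by positivity
  push_cast at hB ⊢
  have key : (a ∈ A ∧ b ∈ A ∧ RConn ρ r A a b) ∨
      ∃ p ∈ B, ∃ q ∈ B, ρ a p ≤ d + r ∧ RConn ρ (d + 2 * r) B p q ∧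
        (q = b ∨ ∃ y ∈ A, b ∈ A ∧ ρ q y < r ∧ RConn ρ r A y b) := by
    induction hab with
    | refl =>
      rcases ha with ha | ha
      · exact Or.inl ⟨ha, ha, .refl⟩
      · exact Or.inr ⟨a, ha, a, ha, by rw [h0]; positivity, .refl, Or.inl rfl⟩
    | @tail b c _ hbc ih =>
      obtain ⟨_, hc, hlt⟩ := hbc
      rcases ih with ⟨haA, hbA, hconn⟩ | ⟨p, hp, q, hq, hap, hpq, hend⟩
      · rcases hc with hc | hc
        · exact Or.inl ⟨haA, hc, hconn.tail ⟨hbA, hc, hlt⟩⟩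
        · refine Or.inr ⟨c, hc, c, hc, ?_, .refl, Or.inl rfl⟩
          linarith [htri a b c, hA a haA b hbA hconn]
      · right
        rcases hend with rfl | ⟨y, hy, hbA, hqy, hyb⟩
        · rcases hc with hc | hc
          · exact ⟨p, hp, q, hq, hap, hpq, Or.inr ⟨c, hc, hc, hlt, .refl⟩⟩
          · exact ⟨p, hp, c, hc, hap, hpq.tail ⟨hq, hc, by linarith⟩, Or.inl rfl⟩
        · rcases hc with hc | hc
          · exact ⟨p, hp, q, hq, hap, hpq,
              Or.inr ⟨y, hy, hc, hqy, hyb.tail ⟨hbA, hc, hlt⟩⟩⟩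
          · refine ⟨p, hp, c, hc, hap, hpq.tail ⟨hq, hc, ?_⟩, Or.inl rfl⟩
            linarith [htri q y c, htri y b c, hA y hy b hbA hyb]
  rcases key with ⟨haA, hbA, hconn⟩ | ⟨p, hp, q, hq, hap, hpq, hend⟩
  · linarith [hA a haA b hbA hconn]
  · have h1 := hB p hp q hq hpq
    rcases hend with rfl | ⟨y, hy, hbA, hqy, hyb⟩
    · linarith [htri a p q]
    · linarith [htri a p b, htri p q b, htri q y b, hA y hy b hbA hyb]

lemma Good.union (h0 : ∀ a, ρ a a = 0) (htri : ∀ a b c, ρ a c ≤ ρ a b + ρ b c)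
    {k : ℕ} {U V : Set Z} {r d d' : ℕ} (hU : Good ρ k U r d) (hV : Good ρ k V (d + 2 * r) d') :
    Good ρ k (U ∪ V) r (d' + 2 * (d + r)) := by
  obtain ⟨A, hA, hA'⟩ := hU
  obtain ⟨B, hB, hB'⟩ := hV
  refine ⟨fun j => A j ∪ B j, ?_, ?_⟩
  · rintro z (hz | hz)
    · obtain ⟨j, hj⟩ := hA z hz
      exact ⟨j, Or.inl hj⟩
    · obtain ⟨j, hj⟩ := hB z hz
      exact ⟨j, Or.inr hj⟩
  · intro j a ha b _ hab
    exact bound_union h0 htri (hA' j) (hB' j) ha hab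

/-- Finite union theorem with uniform control: the threshold `L` and the bound `b` depend only on
the number `n` of sets, the control function `f` and the scale `r`, not on the space. -/
lemma good_iUnion (k : ℕ) (f : ℕ → ℕ) (n : ℕ) : ∀ r : ℕ, 0 < r → ∃ L b : ℕ,
    ∀ (Z : Type) (ρ : Z → Z → ℝ), (∀ a, ρ a a = 0) → (∀ a b c, ρ a c ≤ ρ a b + ρ b c) →
    ∀ U : Fin n → Set Z, (∀ j, ∀ s, 0 < s → s ≤ L → Good ρ k (U j) s (f s)) →
    Good ρ k (⋃ j, U j) r b := by
  induction n with
  | zero =>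
    intro r _
    refine ⟨0, 0, fun Z ρ _ _ U _ => ⟨fun _ => ∅, ?_, ?_⟩⟩
    · intro z hz
      simp at hz
    · intro j a ha
      exact absurd ha (notMem_empty a)
  | succ n ih =>
    intro r hr
    obtain ⟨L, b, hLb⟩ := ih r hr
    refine ⟨max L (b + 2 * r), f (b + 2 * r) + 2 * (b + r), ?_⟩
    intro Z ρ h0 htri U hU
    have h1 := hLb Z ρ h0 htri (fun j => U j.castSucc)
      fun j s hs hsL => hU _ s hs (hsL.trans (le_max_left _ _))
    have h2 := hU (Fin.last n) (b + 2 * r) (by omega) (le_max_right _ _)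
    obtain ⟨W, hW, hW'⟩ := h1.union h0 htri h2
    refine ⟨W, fun z hz => hW z ?_, hW'⟩
    obtain ⟨j, hj⟩ := mem_iUnion.1 hz
    induction j using Fin.lastCases with
    | last => exact Or.inr hj
    | cast j => exact Or.inl (mem_iUnion.2 ⟨j, hj⟩)

lemma rconn_symm (hsymm : ∀ a b, ρ a b = ρ b a) {R : ℝ} {U : Set Z} {a b : Z}
    (h : RConn ρ R U a b) : RConn ρ R U b a := by
  induction h with
  | refl => exact .refl
  | tail _ hbc ih => exact .head ⟨hbc.2.1, hbc.1, by rw [hsymm]; exact hbc.2.2⟩ ih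

/-- If every `L`-component of `U` embeds isometrically in `X`, then at each scale `r ≤ L` a cover
of `X` pulls back to a cover of `U` with the same bound. -/
lemma Good.of_components (hsymm : ∀ a b, ρ a b = ρ b a) {k r L d : ℕ} (hrL : r ≤ L)
    (hX : Good σ k univ r d) {U : Set Z}
    (hφ : ∀ c ∈ U, ∃ φ : Z → X, ∀ z ∈ U, ∀ z' ∈ U, RConn ρ L U c z → RConn ρ L U c z' →
      σ (φ z) (φ z') = ρ z z') :
    Good ρ k U r d := by
  classical
  let s : Setoid Z := ⟨RConn ρ L U, fun _ => .refl, rconn_symm hsymm, fun h h' => h.trans h'⟩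
  -- `rep z` is the chosen base point of the component of `z`
  let rep : Z → Z := fun z => (Quotient.mk s z).out
  have hrep : ∀ z, RConn ρ L U (rep z) z := fun z => Quotient.mk_out (s := s) z
  have hrep_eq : ∀ z z', RConn ρ L U z z' → rep z = rep z' := fun z z' h =>
    congrArg Quotient.out (Quotient.sound (s := s) h)
  have hrepU : ∀ z ∈ U, rep z ∈ U := by
    intro z hz
    rcases (hrep z).cases_head with h | ⟨c, hc, _⟩
    · rw [h]; exact hz
    · exact hc.1
  have hX0 : ∀ c : Z, c ∈ U → Nonempty X := fun c hc => (hφ c hc).elim fun φ _ => ⟨φ c⟩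
  obtain ⟨V, hV, hV'⟩ := hX
  rcases U.eq_empty_or_nonempty with hU | ⟨u, hu⟩
  · refine ⟨fun _ => ∅, fun z hz => ?_, fun j a ha => absurd ha (notMem_empty a)⟩
    rw [hU] at hz
    exact absurd hz (notMem_empty z)
  obtain ⟨x₀⟩ := hX0 u hu
  have hφ' : ∀ c, ∃ φ : Z → X, c ∈ U → ∀ z ∈ U, ∀ z' ∈ U, RConn ρ L U c z → RConn ρ L U c z' →
      σ (φ z) (φ z') = ρ z z' := by
    intro c
    by_cases hc : c ∈ U
    · obtain ⟨φ, h⟩ := hφ c hc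
      exact ⟨φ, fun _ => h⟩
    · exact ⟨fun _ => x₀, fun h => absurd h hc⟩
  choose φ hφ using hφ'
  refine ⟨fun j => {z | z ∈ U ∧ φ (rep z) z ∈ V j}, ?_, ?_⟩
  · intro z hz
    obtain ⟨j, hj⟩ := hV (φ (rep z) z) trivial
    exact ⟨j, hz, hj⟩
  · intro j a ha b hb hab
    have key : RConn ρ L U a b ∧ RConn σ r (V j) (φ (rep a) a) (φ (rep a) b) := by
      clear hb
      induction hab with
      | refl => exact ⟨.refl, .refl⟩
      | @tail b c _ hbc ih =>
        obtain ⟨hb, hc, hlt⟩ := hbc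
        obtain ⟨h1, h2⟩ := ih
        have hrL' : (r : ℝ) ≤ L := by exact_mod_cast hrL
        have h3 : RConn ρ L U a c := h1.tail ⟨hb.1, hc.1, hlt.trans_le hrL'⟩
        refine ⟨h3, h2.tail ⟨?_, ?_, ?_⟩⟩
        · rw [hrep_eq a b h1]; exact hb.2
        · rw [hrep_eq a c h3]; exact hc.2
        · rw [hφ (rep a) (hrepU a ha.1) b hb.1 c hc.1 ((hrep a).trans h1) ((hrep a).trans h3)]
          exact hlt
    obtain ⟨h1, h2⟩ := key
    rw [← hφ (rep a) (hrepU a ha.1) a ha.1 b hb.1 (hrep a) ((hrep a).trans h1)]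
    refine hV' j _ ha.2 _ ?_ h2
    rw [hrep_eq a b h1]; exact hb.2

end Cover

/-! ### The two inequalities -/

section Main

variable {Γ : Type} [Group Γ] {S : Set Γ} {Gsub : ℕ → Subgroup Γ}
  {dQ : ∀ i, Γ ⧸ Gsub i → Γ ⧸ Gsub i → ℝ}

lemma group_le_box (hS : IsFinSymmGen S) (hnested : ∀ i, Gsub (i + 1) ≤ Gsub i)
    (htriv : (⨅ i, Gsub i) = ⊥) (hd : ∀ i, IsQuotMetric S (Gsub i) (dQ i)) {k : ℕ}
    (h : FamAsdimLE (fun i : ℕ => Γ ⧸ Gsub i) dQ k) :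
    FamAsdimLE (fun _ : Unit => Γ) (fun _ => wordDist S) k := by
  intro R hR
  obtain ⟨D, hD⟩ := h R hR
  choose U hU hU' using hD
  have hF : (Filter.hyperfilter ℕ : Filter ℕ) ≤ Filter.atTop := Nat.hyperfilter_le_atTop
  refine ⟨D, fun _ => ⟨fun j => {g | ∀ᶠ i in (Filter.hyperfilter ℕ : Filter ℕ),
    (QuotientGroup.mk g : Γ ⧸ Gsub i) ∈ U i j}, ?_, ?_⟩⟩
  · intro g
    have : ∀ᶠ i in (Filter.hyperfilter ℕ : Filter ℕ),
        ∃ j, (QuotientGroup.mk g : Γ ⧸ Gsub i) ∈ U i j :=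
      Filter.Eventually.of_forall fun i => hU i _
    simpa only [mem_ofPred_eq] using Ultrafilter.eventually_exists_iff.1 this
  · intro j a ha b hb hab
    have key : ∀ᶠ i in (Filter.hyperfilter ℕ : Filter ℕ),
        RConn (dQ i) R (U i j) (QuotientGroup.mk a) (QuotientGroup.mk b) := by
      clear hb
      induction hab with
      | refl => exact Filter.Eventually.of_forall fun _ => .refl
      | @tail b c _ hbc ih =>
        obtain ⟨hb, hc, hlt⟩ := hbc
        filter_upwards [ih, hb, hc] with i h1 h2 h3
        exact h1.tail ⟨h2, h3, (dQ_le (hd i) b c).trans_lt hlt⟩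
    have hinj : Filter.Eventually _ (Filter.hyperfilter ℕ : Filter ℕ) := hF (eventually_injective hS Gsub hnested htriv (2 * wordLength S (a⁻¹ * b)))
    obtain ⟨i, h1, h2, h3, h4⟩ := (key.and (hinj.and (Filter.Eventually.and ha hb))).exists
    have := hU' i j _ h3 _ h4 h1
    rwa [dQ_eq_of_injective hS (hd i) h2 le_rfl] at this

lemma box_le_group (hS : IsFinSymmGen S) (hfin : ∀ i, (Gsub i).index ≠ 0)
    (hnested : ∀ i, Gsub (i + 1) ≤ Gsub i)
    (htriv : (⨅ i, Gsub i) = ⊥) (hd : ∀ i, IsQuotMetric S (Gsub i) (dQ i)) {m k : ℕ}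
    (hm : FamAsdimLE (fun i : ℕ => Γ ⧸ Gsub i) dQ m)
    (h : FamAsdimLE (fun _ : Unit => Γ) (fun _ => wordDist S) k) :
    FamAsdimLE (fun i : ℕ => Γ ⧸ Gsub i) dQ k := by
  rw [famAsdimLE_iff] at hm h ⊢
  have hf : ∀ r : ℕ, ∃ d : ℕ, 0 < r → Good (wordDist S) k univ r d := by
    intro r
    by_cases hr : 0 < r
    · obtain ⟨d, hd⟩ := h r hr
      exact ⟨d, fun _ => hd ()⟩
    · exact ⟨0, fun h => absurd h hr⟩
  choose f hf using hf
  intro R hR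
  obtain ⟨L, b, hLb⟩ := good_iUnion k f (m + 1) R hR
  -- scale `L + 1` rather than `L`, since `FamAsdimLE` concerns positive scales only
  obtain ⟨D, hD⟩ := hm (L + 1) (Nat.succ_pos L)
  have hlarge : ∀ᶠ i in Filter.atTop, Good (dQ i) k univ R b := by
    filter_upwards [eventually_injective hS Gsub hnested htriv (2 * (2 * D))] with i hi
    obtain ⟨U, hU, hU'⟩ := hD i
    have hcov : (⋃ j, U j) = univ := eq_univ_of_forall fun z => mem_iUnion.2 (hU z trivial)
    rw [← hcov]
    refine hLb _ (dQ i) (dQ_self (hd i)) (dQ_triangle hS (hd i)) U fun j s hs hsL => ?_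
    refine Good.of_components (dQ_symm hS (hd i)) (hsL.trans (Nat.le_succ L)) (hf s hs) ?_
    intro c hc
    obtain ⟨g, rfl⟩ := QuotientGroup.mk_surjective c
    choose φ hφ hφ' using dQ_attained (hd i) g
    refine ⟨φ, fun z hz z' hz' hcz hcz' => ?_⟩
    have h1 := hU' j _ hc z hz hcz
    have h2 := hU' j _ hc z' hz' hcz'
    rw [hφ'] at h1 h2
    have h1' : wordLength S (g⁻¹ * φ z) ≤ D := by exact_mod_cast h1
    have h2' : wordLength S (g⁻¹ * φ z') ≤ D := by exact_mod_cast h2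
    have h3 := wordLength_mul_le hS (g⁻¹ * φ z)⁻¹ (g⁻¹ * φ z')
    have h4 := wordLength_inv_le hS (g⁻¹ * φ z)
    rw [show (g⁻¹ * φ z)⁻¹ * (g⁻¹ * φ z') = (φ z)⁻¹ * φ z' by group] at h3
    have h5 := dQ_eq_of_injective hS (hd i) hi (x := φ z) (y := φ z') (by omega)
    rw [hφ, hφ] at h5
    exact h5.symm
  obtain ⟨i₀, hi₀⟩ := Filter.eventually_atTop.1 hlarge
  have hbdd : ∀ i, ∃ e : ℕ, ∀ y z, dQ i y z ≤ e := by
    intro i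
    have : Finite (Γ ⧸ Gsub i) :=
      have : (Gsub i).FiniteIndex := ⟨hfin i⟩
      inferInstance
    obtain ⟨M, hM⟩ := (Set.finite_range fun p : (Γ ⧸ Gsub i) × (Γ ⧸ Gsub i) =>
      dQ i p.1 p.2).bddAbove
    obtain ⟨e, he⟩ := exists_nat_ge M
    exact ⟨e, fun y z => (hM ⟨(y, z), rfl⟩).trans he⟩
  choose e he using hbdd
  refine ⟨max b ((Finset.range i₀).sup e), fun i => ?_⟩
  rcases lt_or_ge i i₀ with hi | hi
  · refine ⟨fun _ => univ, fun _ _ => ⟨0, trivial⟩, fun _ y _ z _ _ => (he i y z).trans ?_⟩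
    exact_mod_cast (Finset.le_sup (f := e) (Finset.mem_range.2 hi)).trans (le_max_right _ _)
  · obtain ⟨W, hW, hW'⟩ := hi₀ i hi
    refine ⟨W, hW, fun j y hy z hz hyz => (hW' j y hy z hz hyz).trans ?_⟩
    exact_mod_cast le_max_left _ _

end Main

theorem asdim_of_box_space_infinite_or_equal_to_asdim_of_group
    {Γ : Type} [Group Γ] (S : Set Γ) (hS : IsFinSymmGen S)
    -- the box space data
    (Gsub : ℕ → Subgroup Γ)
    (hnorm : ∀ i, (Gsub i).Normal)
    (hfin : ∀ i, (Gsub i).index ≠ 0)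
    (hnested : ∀ i, Gsub (i + 1) ≤ Gsub i)
    (htriv : (⨅ i, Gsub i) = ⊥)
    -- the quotient word metrics on the quotients Γ/Γ_i
    (dQ : ∀ i, Γ ⧸ Gsub i → Γ ⧸ Gsub i → ℝ)
    (hdQ : ∀ (i : ℕ) (g h : Γ),
      dQ i (QuotientGroup.mk g) (QuotientGroup.mk h) =
        sInf ((fun n => (wordLength S (g⁻¹ * h * n) : ℝ)) '' (Gsub i : Set Γ))) :
    -- either the box space has infinite asymptotic dimension ...
    (¬ ∃ k : ℕ, FamAsdimLE (fun i : ℕ => Γ ⧸ Gsub i) dQ k) ∨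
    -- ... or its asymptotic dimension equals that of Γ
    (∀ k : ℕ, FamAsdimLE (fun i : ℕ => Γ ⧸ Gsub i) dQ k ↔
      FamAsdimLE (fun _ : Unit => Γ) (fun _ => wordDist S) k) := by
  by_cases hbox : ∃ m : ℕ, FamAsdimLE (fun i : ℕ => Γ ⧸ Gsub i) dQ m
  · obtain ⟨m, hm⟩ := hbox
    exact Or.inr fun k => ⟨group_le_box hS hnested htriv hdQ,
      box_le_group hS hfin hnested htriv hdQ hm⟩
  · exact Or.inl hbox
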